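/- Assume m, n ≥ 7. Then the QAP4 inequality ∑_{r=1}^m Y((i_r,j_r),(i_r,j_r)) − ∑_{1≤r<s≤m} Y((i_r,j_r),(i_s,j_s)) ≤ 1 is facet-defining for the QAP-polytope QAP_n: it is valid for all points of QAP_n, and the dimension of the affine span (in the real vector space of n²×n² matrices) of the set {P^[2]_τ : τ ∈ S_1 ∪ S_2} of vertices satisfying it with equality is exactly one less than the dimension of the affine span of the set {P^[2]_σ : σ a permutation of [n]} of all vertices of QAP_n. -/

import Mathlib

open Finset

/-- The matrix `P^[2]_σ`: entry at `((i,j),(k,l))` is `P_σ(i,j) · P_σ(k,l)`, where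
`P_σ` is the permutation matrix of `σ`. -/
noncomputable def permMat2 {n : ℕ} (σ : Equiv.Perm (Fin n)) :
    (Fin n × Fin n) → (Fin n × Fin n) → ℝ :=
  fun p q => (if σ p.1 = p.2 then (1 : ℝ) else 0) * (if σ q.1 = q.2 then (1 : ℝ) else 0)


/-- `Sk i j k`: the set of permutations `σ` such that `σ (i r) = j r` holds for exactly `k`
indices `r`. -/
def Sk {n m : ℕ} (i j : Fin m → Fin n) (k : ℕ) : Set (Equiv.Perm (Fin n)) :=
  {σ | (Finset.univ.filter (fun r : Fin m => σ (i r) = j r)).card = k}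


/-- The alternating third difference relation. -/
def CubeRel {n : ℕ} {V : Type*} [AddCommGroup V] (f : Equiv.Perm (Fin n) → V) : Prop :=
  ∀ (σ : Equiv.Perm (Fin n)) (a b c d e g : Fin n), [a, b, c, d, e, g].Nodup →
    f σ - f (σ * Equiv.swap a b) - f (σ * Equiv.swap c d) - f (σ * Equiv.swap e g)
      + f (σ * Equiv.swap a b * Equiv.swap c d) + f (σ * Equiv.swap a b * Equiv.swap e g)
      + f (σ * Equiv.swap c d * Equiv.swap e g)
      - f (σ * Equiv.swap a b * Equiv.swap c d * Equiv.swap e g) = 0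

theorem swap_trichotomy {n : ℕ} {a b c d e g : Fin n} (h : [a, b, c, d, e, g].Nodup) (x : Fin n) :
    (Equiv.swap c d x = x ∧ Equiv.swap e g x = x) ∨
    (Equiv.swap a b x = x ∧ Equiv.swap e g x = x ∧
      Equiv.swap a b (Equiv.swap c d x) = Equiv.swap c d x) ∨
    (Equiv.swap a b x = x ∧ Equiv.swap c d x = x ∧
      Equiv.swap a b (Equiv.swap e g x) = Equiv.swap e g x ∧
      Equiv.swap c d (Equiv.swap e g x) = Equiv.swap e g x) := by
  simp only [List.nodup_cons, List.mem_cons, List.not_mem_nil, not_or, or_false] at h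
  by_cases h1 : x = c ∨ x = d
  · right; left
    rcases h1 with rfl | rfl <;> simp [Equiv.swap_apply_def] <;> grind
  · by_cases h2 : x = e ∨ x = g
    · right; right
      rcases h2 with rfl | rfl <;> simp [Equiv.swap_apply_def] <;> grind
    · left
      simp [Equiv.swap_apply_def]; grind

/-- Entry of the permutation matrix. -/
noncomputable def ind {n : ℕ} (σ : Equiv.Perm (Fin n)) (x y : Fin n) : ℝ :=
  if σ x = y then 1 else 0

theorem ind_mul {n : ℕ} (σ s : Equiv.Perm (Fin n)) (x y : Fin n) :
    ind (σ * s) x y = ind σ (s x) y := rfl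

theorem permMat2_eq {n : ℕ} (σ : Equiv.Perm (Fin n)) (p q : Fin n × Fin n) :
    permMat2 σ p q = ind σ p.1 p.2 * ind σ q.1 q.2 := rfl

theorem cubeRel_permMat2 {n : ℕ} : CubeRel (permMat2 (n := n)) := by
  intro σ a b c d e g h
  funext p q
  simp only [Pi.sub_apply, Pi.add_apply, Pi.zero_apply, permMat2_eq, ind_mul]
  rcases swap_trichotomy h p.1 with h1 | h1 | h1 <;>
  rcases swap_trichotomy h q.1 with h2 | h2 | h2 <;>
  simp only [h1, h2] <;> ring

section core
variable {n : ℕ}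

/-- Marked fixed points. -/
def fx (M : Finset (Fin n)) (τ : Equiv.Perm (Fin n)) : Finset (Fin n) :=
  M.filter (fun x => τ x = x)

theorem mem_fx {M : Finset (Fin n)} {τ : Equiv.Perm (Fin n)} {x : Fin n} :
    x ∈ fx M τ ↔ x ∈ M ∧ τ x = x := by simp [fx]

theorem fx_down {M : Finset (Fin n)} {τ : Equiv.Perm (Fin n)} {a b : Fin n}
    (ha : a ∈ fx M τ) (hab : a ≠ b) : fx M (τ * Equiv.swap a b) = fx M τ \ {a, b} := by
  ext x
  simp only [mem_fx, Finset.mem_sdiff, Finset.mem_insert, Finset.mem_singleton,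
    Equiv.Perm.mul_apply] at *
  have hb : τ b ≠ a := fun h => hab (τ.injective (ha.2.trans h.symm))
  by_cases h1 : x = a
  · subst h1; simp [hb]
  by_cases h2 : x = b
  · subst h2; simp [ha.2, hab]
  simp [Equiv.swap_apply_of_ne_of_ne h1 h2, h1, h2]

theorem fx_same {M : Finset (Fin n)} {τ : Equiv.Perm (Fin n)} {a b : Fin n}
    (ha : a ∉ fx M τ) (hb : b ∉ fx M τ) (h1 : b ∈ M → τ a ≠ b) (h2 : a ∈ M → τ b ≠ a) :
    fx M (τ * Equiv.swap a b) = fx M τ := by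
  ext x
  simp only [mem_fx, Equiv.Perm.mul_apply] at *
  by_cases e1 : x = a
  · subst e1; simp; tauto
  by_cases e2 : x = b
  · subst e2; simp; tauto
  simp [Equiv.swap_apply_of_ne_of_ne e1 e2]

theorem exists_new (S : Finset (Fin n)) (h : S.card < n) : ∃ x, x ∉ S := by
  by_contra! hc
  have : S = Finset.univ := Finset.eq_univ_iff_forall.2 hc
  subst this; simp at h

variable {M : Finset (Fin n)} {f : Equiv.Perm (Fin n) → ℝ} 

theorem swap3 (hn : 7 ≤ n) (hf : CubeRel f)
    (h1 : ∀ τ, (fx M τ).card = 1 → f τ = 0) (h2 : ∀ τ, (fx M τ).card = 2 → f τ = 0)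
    {τ : Equiv.Perm (Fin n)} (h3 : (fx M τ).card = 3) {a b : Fin n} (hab : a ≠ b)
    (ha : a ∉ fx M τ) (hb : b ∉ fx M τ) (hs : fx M (τ * Equiv.swap a b) = fx M τ) :
    f (τ * Equiv.swap a b) = f τ := by
  obtain ⟨p, q, r, hpq, hpr, hqr, hT⟩ := Finset.card_eq_three.1 h3
  obtain ⟨y, hy⟩ := exists_new ({p, q, r, a, b} : Finset (Fin n))
    (lt_of_le_of_lt Finset.card_le_five (by omega))
  obtain ⟨z, hz⟩ := exists_new ({p, q, r, a, b, y} : Finset (Fin n))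
    (lt_of_le_of_lt Finset.card_le_six (by omega))
  rw [hT] at ha hb
  simp only [Finset.mem_insert, Finset.mem_singleton, not_or] at ha hb hy hz
  have hq : q ∈ fx M τ := by simp [hT]
  have hr : r ∈ fx M τ := by simp [hT]
  have key := hf τ a b q y r z (by simp; grind)
  have e2 : fx M (τ * Equiv.swap q y) = {p, r} := by
    rw [fx_down hq (by grind), hT]; grind
  have e3 : fx M (τ * Equiv.swap r z) = {p, q} := by
    rw [fx_down hr (by grind), hT]; grind
  have e12 : fx M (τ * Equiv.swap a b * Equiv.swap q y) = {p, r} := by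
    rw [fx_down (by rw [hs]; exact hq) (by grind), hs, hT]; grind
  have e13 : fx M (τ * Equiv.swap a b * Equiv.swap r z) = {p, q} := by
    rw [fx_down (by rw [hs]; exact hr) (by grind), hs, hT]; grind
  have e23 : fx M (τ * Equiv.swap q y * Equiv.swap r z) = {p} := by
    rw [fx_down (by rw [e2]; simp) (by grind), e2]; grind
  have e123 : fx M (τ * Equiv.swap a b * Equiv.swap q y * Equiv.swap r z) = {p} := by
    rw [fx_down (by rw [e12]; simp) (by grind), e12]; grind
  rw [h2 _ ((congrArg Finset.card e2).trans (Finset.card_pair hpr)), h2 _ ((congrArg Finset.card e3).trans (Finset.card_pair hpq)),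
    h2 _ ((congrArg Finset.card e12).trans (Finset.card_pair hpr)), h2 _ ((congrArg Finset.card e13).trans (Finset.card_pair hpq)),
    h1 _ ((congrArg Finset.card e23).trans (Finset.card_singleton _)), h1 _ ((congrArg Finset.card e123).trans (Finset.card_singleton _))] at key
  linarith

/-- swap move from pointwise hypotheses -/
theorem swap3' (hn : 7 ≤ n) (hf : CubeRel f)
    (h1 : ∀ τ, (fx M τ).card = 1 → f τ = 0) (h2 : ∀ τ, (fx M τ).card = 2 → f τ = 0)
    {τ : Equiv.Perm (Fin n)} (h3 : (fx M τ).card = 3) {a b : Fin n} (hab : a ≠ b)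
    (ha : a ∉ fx M τ) (hb : b ∉ fx M τ) (e1 : b ∈ M → τ a ≠ b) (e2 : a ∈ M → τ b ≠ a) :
    fx M (τ * Equiv.swap a b) = fx M τ ∧ f (τ * Equiv.swap a b) = f τ :=
  ⟨fx_same ha hb e1 e2, swap3 hn hf h1 h2 h3 hab ha hb (fx_same ha hb e1 e2)⟩

/-- inverting a 3-cycle -/
theorem inv3 (hn : 7 ≤ n) (hf : CubeRel f)
    (h1 : ∀ τ, (fx M τ).card = 1 → f τ = 0) (h2 : ∀ τ, (fx M τ).card = 2 → f τ = 0)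
    {τ : Equiv.Perm (Fin n)} (h3 : (fx M τ).card = 3) {a b c : Fin n} (hab : a ≠ b)
    (hac : a ≠ c) (hbc : b ≠ c) (ta : τ a = b) (tb : τ b = c) (tc : τ c = a) :
    ∃ τ', fx M τ' = fx M τ ∧ f τ' = f τ ∧ τ' a = c ∧ τ' b = a ∧ τ' c = b ∧
      ∀ x, x ≠ a → x ≠ b → x ≠ c → τ' x = τ x := by
  obtain ⟨w, hw⟩ := exists_new (fx M τ ∪ {a, b, c} : Finset (Fin n))
    (lt_of_le_of_lt ((Finset.card_union_le _ _).trans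
      (Nat.add_le_add h3.le Finset.card_le_three)) (by omega))
  simp only [Finset.mem_union, Finset.mem_insert, Finset.mem_singleton, not_or] at hw
  obtain ⟨hwf, hwa, hwb, hwc⟩ := hw
  have ha : a ∉ fx M τ := fun h => hab ((mem_fx.1 h).2.symm.trans ta)
  have hb : b ∉ fx M τ := fun h => hbc ((mem_fx.1 h).2.symm.trans tb)
  have hc : c ∉ fx M τ := fun h => hac (tc.symm.trans (mem_fx.1 h).2)
  have tw : τ w ≠ a := fun h => hwc (τ.injective (h.trans tc.symm))
  obtain ⟨F1, E1⟩ := swap3' hn hf h1 h2 h3 (Ne.symm hwa) ha hwf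
    (fun _ => by rw [ta]; exact Ne.symm hwb) (fun _ => tw)
  set τ1 := τ * Equiv.swap a w with hτ1
  have v1a : τ1 a = τ w := by simp [hτ1]
  have v1w : τ1 w = b := by simp [hτ1, ta]
  have v1 : ∀ x, x ≠ a → x ≠ w → τ1 x = τ x := fun x h h' => by
    simp [hτ1, Equiv.swap_apply_of_ne_of_ne h h']
  obtain ⟨F2, E2⟩ := swap3' hn hf h1 h2 (τ := τ1) (by rw [F1, h3]) (Ne.symm hwc) (by rwa [F1])
    (by rwa [F1]) (fun _ => by rw [v1 c hac.symm (Ne.symm hwc), tc]; exact Ne.symm hwa)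
    (fun _ => by rw [v1w]; exact hbc)
  set τ2 := τ1 * Equiv.swap c w with hτ2
  have v2c : τ2 c = b := by simp [hτ2, v1w]
  have v2w : τ2 w = a := by simp [hτ2, v1 c hac.symm (Ne.symm hwc), tc]
  have v2 : ∀ x, x ≠ c → x ≠ w → τ2 x = τ1 x := fun x h h' => by
    simp [hτ2, Equiv.swap_apply_of_ne_of_ne h h']
  have v2b : τ2 b = c := by rw [v2 b hbc (Ne.symm hwb), v1 b hab.symm (Ne.symm hwb), tb]
  obtain ⟨F3, E3⟩ := swap3' hn hf h1 h2 (τ := τ2) (by rw [F2, F1, h3]) (Ne.symm hwb)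
    (by rwa [F2, F1]) (by rwa [F2, F1]) (fun _ => by rw [v2b]; exact Ne.symm hwc)
    (fun _ => by rw [v2w]; exact hab)
  set τ3 := τ2 * Equiv.swap b w with hτ3
  have v3b : τ3 b = a := by simp [hτ3, v2w]
  have v3w : τ3 w = c := by simp [hτ3, v2b]
  have v3 : ∀ x, x ≠ b → x ≠ w → τ3 x = τ2 x := fun x h h' => by
    simp [hτ3, Equiv.swap_apply_of_ne_of_ne h h']
  have v3a : τ3 a = τ w := by rw [v3 a hab (Ne.symm hwa), v2 a hac (Ne.symm hwa), v1a]
  obtain ⟨F4, E4⟩ := swap3' hn hf h1 h2 (τ := τ3) (by rw [F3, F2, F1, h3]) (Ne.symm hwa)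
    (by rwa [F3, F2, F1]) (by rwa [F3, F2, F1])
    (fun hM => by rw [v3a]; exact fun h => hwf (mem_fx.2 ⟨hM, h⟩))
    (fun _ => by rw [v3w]; exact hac.symm)
  set τ4 := τ3 * Equiv.swap a w with hτ4
  have v4 : ∀ x, x ≠ a → x ≠ w → τ4 x = τ3 x := fun x h h' => by
    simp [hτ4, Equiv.swap_apply_of_ne_of_ne h h']
  refine ⟨τ4, by rw [F4, F3, F2, F1], by rw [E4, E3, E2, E1], by simp [hτ4, v3w], ?_, ?_, ?_⟩
  · rw [v4 b hab.symm (Ne.symm hwb), v3b]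
  · rw [v4 c hac.symm (Ne.symm hwc), v3 c hbc.symm (Ne.symm hwc), v2c]
  · intro x xa xb xc
    by_cases xw : x = w
    · subst xw; simp [hτ4, v3a]
    · rw [v4 x xa xw, v3 x xb xw, v2 x xc xw, v1 x xa xw]

/-- Disagreement set -/
def dis (τ τ' : Equiv.Perm (Fin n)) : Finset (Fin n) := Finset.univ.filter (fun x => τ x ≠ τ' x)

theorem mem_dis {τ τ' : Equiv.Perm (Fin n)} {x : Fin n} : x ∈ dis τ τ' ↔ τ x ≠ τ' x := by
  simp [dis]

theorem dis_comm (τ τ' : Equiv.Perm (Fin n)) : dis τ τ' = dis τ' τ := by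
  ext; simp [mem_dis, ne_comm]

theorem step3 (hn : 7 ≤ n) (hf : CubeRel f)
    (h1 : ∀ τ, (fx M τ).card = 1 → f τ = 0) (h2 : ∀ τ, (fx M τ).card = 2 → f τ = 0)
    {τ τ' : Equiv.Perm (Fin n)} (h3 : (fx M τ).card = 3) (hT : fx M τ' = fx M τ)
    {a : Fin n} (ha : τ a ≠ τ' a) (hbl : τ (τ a) ≠ τ' a ∨ τ a ∉ M) :
    ∃ τ1, fx M τ1 = fx M τ ∧ f τ1 = f τ ∧ (dis τ1 τ').card < (dis τ τ').card := by
  obtain ⟨b, hb⟩ := τ.surjective (τ' a)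
  have hab : a ≠ b := by rintro rfl; exact ha hb
  have hb' : τ b ≠ τ' b := fun h => hab (τ'.injective (hb.symm.trans h))
  have nf : ∀ x, τ x ≠ τ' x → x ∉ fx M τ := fun x hx h => by
    have h' := h
    rw [← hT] at h'
    exact hx ((mem_fx.1 h).2.trans (mem_fx.1 h').2.symm)
  obtain ⟨F, E⟩ := swap3' hn hf h1 h2 h3 hab (nf a ha) (nf b hb')
    (fun hM h => by
      rcases hbl with hbl | hbl
      · apply hbl; rw [h, hb]
      · apply hbl; rwa [h])
    (fun hM h => by
      have : a ∈ fx M τ' := mem_fx.2 ⟨hM, hb.symm.trans h⟩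
      rw [hT] at this
      exact nf a ha this)
  refine ⟨_, F, E, Finset.card_lt_card ?_⟩
  rw [Finset.ssubset_iff_of_subset]
  · exact ⟨a, mem_dis.2 ha, by simp [mem_dis, hb]⟩
  · intro x hx
    rw [mem_dis] at *
    by_cases e1 : x = a
    · rwa [e1]
    by_cases e2 : x = b
    · rwa [e2]
    simpa [Equiv.swap_apply_of_ne_of_ne e1 e2] using hx

theorem sameT (hn : 7 ≤ n) (hf : CubeRel f)
    (h1 : ∀ τ, (fx M τ).card = 1 → f τ = 0) (h2 : ∀ τ, (fx M τ).card = 2 → f τ = 0) :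
    ∀ (N : ℕ) (τ τ' : Equiv.Perm (Fin n)), (dis τ τ').card = N → (fx M τ).card = 3 →
      fx M τ' = fx M τ → f τ = f τ' := by
  intro N
  induction N using Nat.strong_induction_on with
  | _ N ih =>
  intro τ τ' hN h3 hT
  by_cases hA : ∃ a, τ a ≠ τ' a ∧ (τ (τ a) ≠ τ' a ∨ τ a ∉ M)
  · obtain ⟨a, ha, hbl⟩ := hA
    obtain ⟨τ1, F, E, hd⟩ := step3 hn hf h1 h2 h3 hT ha hbl
    rw [← E]
    exact ih _ (hN ▸ hd) τ1 τ' rfl (by rw [F, h3]) (by rw [hT, F])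
  by_cases hB : ∃ a, τ' a ≠ τ a ∧ (τ' (τ' a) ≠ τ a ∨ τ' a ∉ M)
  · obtain ⟨a, ha, hbl⟩ := hB
    obtain ⟨τ1, F, E, hd⟩ := step3 hn hf h1 h2 (hT ▸ h3) hT.symm ha hbl
    rw [← E]
    rw [dis_comm τ' τ, hN] at hd
    exact (ih _ hd τ1 τ rfl (by rw [F, hT, h3]) (by rw [F, hT])).symm
  push Not at hA hB
  by_cases hD : ∃ a, τ a ≠ τ' a
  · obtain ⟨a, ha⟩ := hD
    have hA1 : ∀ a, τ a ≠ τ' a → τ (τ a) = τ' a := fun a h => (hA a h).1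
    have hB1 : ∀ a, τ a ≠ τ' a → τ' (τ' a) = τ a := fun a h => (hB a h.symm).1
    obtain ⟨b, tb⟩ : ∃ b, τ a = b := ⟨_, rfl⟩
    obtain ⟨c, tc⟩ : ∃ c, τ b = c := ⟨_, rfl⟩
    have ac : τ' a = c := by rw [← hA1 a ha, tb, tc]
    have cb : τ' c = b := by rw [← ac, hB1 a ha, tb]
    have hab : a ≠ b := by
      rintro rfl; exact ha (by rw [ac, ← tc])
    have hbD : τ b ≠ τ' b := fun h => hab (τ'.injective (by rw [ac, ← tc, h]))
    have hbc : b ≠ c := by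
      rintro rfl; exact ha (by rw [tb, ac])
    have hac : a ≠ c := by
      rintro rfl
      exact hab (by rw [← cb, ac])
    have ba : τ' b = a := by
      apply τ'.injective
      rw [hB1 b hbD, tc, ac]
    have ca : τ c = a := by rw [← ba, ← hA1 b hbD, tc]
    obtain ⟨τ1, F, E, v1, v2, v3, v4⟩ := inv3 hn hf h1 h2 h3 hab hac hbc tb tc ca
    rw [← E]
    refine ih _ ?_ τ1 τ' rfl (by rw [F, h3]) (by rw [hT, F])
    rw [← hN]
    apply Finset.card_lt_card
    rw [Finset.ssubset_iff_of_subset]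
    · exact ⟨a, mem_dis.2 ha, by simp [mem_dis, v1, ac]⟩
    · intro x hx
      rw [mem_dis] at *
      by_cases e1 : x = a
      · rwa [e1]
      by_cases e2 : x = b
      · rwa [e2]
      by_cases e3 : x = c
      · subst e3; exact absurd (v3.trans cb.symm) hx
      rwa [v4 x e1 e2 e3] at hx
  · push Not at hD
    rw [Equiv.ext hD]

theorem conj3a (hn : 7 ≤ n) (hf : CubeRel f)
    (h1 : ∀ τ, (fx M τ).card = 1 → f τ = 0) (h2 : ∀ τ, (fx M τ).card = 2 → f τ = 0)
    {τ : Equiv.Perm (Fin n)} (h3 : (fx M τ).card = 3) {p s : Fin n} (hpM : p ∈ M)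
    (hp : p ∉ fx M τ) (hs : s ∈ fx M τ) (hpp : τ (τ p) ≠ p) :
    ∃ τ', fx M τ' = insert p ((fx M τ).erase s) ∧ f τ' = f τ := by
  obtain ⟨x, hx⟩ := τ.surjective p
  have hpx : p ≠ x := by rintro rfl; exact hp (mem_fx.2 ⟨hpM, hx⟩)
  have hxf : x ∉ fx M τ := fun h => hpx (hx.symm.trans (mem_fx.1 h).2)
  have F4 : fx M (τ * Equiv.swap p x) = insert p (fx M τ) := by
    ext y
    simp only [mem_fx, Finset.mem_insert, Equiv.Perm.mul_apply]
    by_cases e1 : y = p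
    · subst e1; simp [hx, hpM]
    by_cases e2 : y = x
    · subst e2
      simp only [Equiv.swap_apply_right]
      constructor
      · rintro ⟨_, h⟩; exact absurd (by rw [h, hx]) hpp
      · rintro (h | h)
        · exact absurd h e1
        · exact absurd (mem_fx.2 h) hxf
    simp [Equiv.swap_apply_of_ne_of_ne e1 e2, e1]
  have hcard : ((fx M τ).erase s).card = 2 := by rw [Finset.card_erase_of_mem hs, h3]
  obtain ⟨q, r, hqr, hE⟩ := Finset.card_eq_two.1 hcard
  have hT : fx M τ = {s, q, r} := by rw [← hE, Finset.insert_erase hs]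
  have hsE : s ∉ ({q, r} : Finset (Fin n)) := by rw [← hE]; simp
  obtain ⟨y, hy⟩ := exists_new ({p, s, q, r, x} : Finset (Fin n))
    (lt_of_le_of_lt Finset.card_le_five (by omega))
  obtain ⟨z, hz⟩ := exists_new ({p, s, q, r, x, y} : Finset (Fin n))
    (lt_of_le_of_lt Finset.card_le_six (by omega))
  rw [hT] at hp hxf F4
  simp only [Finset.mem_insert, Finset.mem_singleton, not_or] at hp hxf hsE hy hz
  set τ4 := τ * Equiv.swap p x with hτ4
  have hback : τ4 * Equiv.swap p x = τ := by rw [hτ4]; simp [mul_assoc]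
  have key1 := hf τ4 p x q y r z (by simp; grind)
  have key2 := hf τ4 s x q y r z (by simp; grind)
  have Fs : fx M (τ4 * Equiv.swap s x) = {p, q, r} := by
    rw [fx_down (by rw [F4]; simp) (by grind), F4]; grind
  have Fp : fx M (τ4 * Equiv.swap p x) = {s, q, r} := by rw [hback, hT]
  have Fsq : fx M (τ4 * Equiv.swap s x * Equiv.swap q y) = {p, r} := by
    rw [fx_down (by rw [Fs]; simp) (by grind), Fs]; grind
  have Fsr : fx M (τ4 * Equiv.swap s x * Equiv.swap r z) = {p, q} := by
    rw [fx_down (by rw [Fs]; simp) (by grind), Fs]; grind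
  have Fpq : fx M (τ4 * Equiv.swap p x * Equiv.swap q y) = {s, r} := by
    rw [fx_down (by rw [Fp]; simp) (by grind), Fp]; grind
  have Fpr : fx M (τ4 * Equiv.swap p x * Equiv.swap r z) = {s, q} := by
    rw [fx_down (by rw [Fp]; simp) (by grind), Fp]; grind
  have Fpqr : fx M (τ4 * Equiv.swap p x * Equiv.swap q y * Equiv.swap r z) = {s} := by
    rw [fx_down (by rw [Fpq]; simp) (by grind), Fpq]; grind
  have Fsqr : fx M (τ4 * Equiv.swap s x * Equiv.swap q y * Equiv.swap r z) = {p} := by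
    rw [fx_down (by rw [Fsq]; simp) (by grind), Fsq]; grind
  refine ⟨τ4 * Equiv.swap s x, by rw [Fs, hE], ?_⟩
  rw [h2 _ ((congrArg Finset.card Fpq).trans (Finset.card_pair (by grind))),
    h2 _ ((congrArg Finset.card Fpr).trans (Finset.card_pair (by grind))),
    h1 _ ((congrArg Finset.card Fpqr).trans (Finset.card_singleton _)), hback] at key1
  rw [h2 _ ((congrArg Finset.card Fsq).trans (Finset.card_pair (by grind))),
    h2 _ ((congrArg Finset.card Fsr).trans (Finset.card_pair (by grind))),
    h1 _ ((congrArg Finset.card Fsqr).trans (Finset.card_singleton _))] at key2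
  linarith

theorem conj3 (hn : 7 ≤ n) (hf : CubeRel f)
    (h1 : ∀ τ, (fx M τ).card = 1 → f τ = 0) (h2 : ∀ τ, (fx M τ).card = 2 → f τ = 0)
    {τ : Equiv.Perm (Fin n)} (h3 : (fx M τ).card = 3) {p s : Fin n} (hpM : p ∈ M)
    (hp : p ∉ fx M τ) (hs : s ∈ fx M τ) :
    ∃ τ', fx M τ' = insert p ((fx M τ).erase s) ∧ f τ' = f τ := by
  by_cases hpp : τ (τ p) = p
  · obtain ⟨w, hw⟩ := exists_new (fx M τ ∪ {p, τ p} : Finset (Fin n))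
      (lt_of_le_of_lt ((Finset.card_union_le _ _).trans
        (Nat.add_le_add h3.le Finset.card_le_two)) (by omega))
    simp only [Finset.mem_union, Finset.mem_insert, Finset.mem_singleton, not_or] at hw
    obtain ⟨hwf, hwp, hwx⟩ := hw
    have hwp' : τ w ≠ p := fun h => hwx (τ.injective (h.trans hpp.symm))
    obtain ⟨F, E⟩ := swap3' hn hf h1 h2 h3 (Ne.symm hwp) hp hwf (fun _ => Ne.symm hwx)
      (fun _ => hwp')
    have hxp : τ p ≠ p := fun h => hp (mem_fx.2 ⟨hpM, h⟩)
    obtain ⟨τ', F', E'⟩ := conj3a hn hf h1 h2 (τ := τ * Equiv.swap p w) (by rw [F, h3]) hpM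
      (by rwa [F]) (by rw [F]; exact hs) (by
        simp only [Equiv.Perm.mul_apply, Equiv.swap_apply_left]
        intro h
        by_cases e : τ w = w
        · rw [e, Equiv.swap_apply_right] at h
          exact hxp h
        · rw [Equiv.swap_apply_of_ne_of_ne hwp' e] at h
          exact hwp (τ.injective (τ.injective (h.trans hpp.symm))))
    exact ⟨τ', by rw [F', F], by rw [E', E]⟩
  · exact conj3a hn hf h1 h2 h3 hpM hp hs hpp

theorem const3 (hn : 7 ≤ n) (hf : CubeRel f)
    (h1 : ∀ τ, (fx M τ).card = 1 → f τ = 0) (h2 : ∀ τ, (fx M τ).card = 2 → f τ = 0) :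
    ∀ (N : ℕ) (τ τ' : Equiv.Perm (Fin n)), (fx M τ' \ fx M τ).card = N → (fx M τ).card = 3 →
      (fx M τ').card = 3 → f τ = f τ' := by
  intro N
  induction N using Nat.strong_induction_on with
  | _ N ih =>
  intro τ τ' hN h3 h3'
  by_cases hD : ∃ p, p ∈ fx M τ' \ fx M τ
  · obtain ⟨p, hp⟩ := hD
    have hp' := Finset.mem_sdiff.1 hp
    obtain ⟨s, hs⟩ : (fx M τ \ fx M τ').Nonempty := by
      rw [← Finset.card_pos, Finset.card_sdiff_comm (h3.trans h3'.symm), Finset.card_pos]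
      exact ⟨p, hp⟩
    rw [Finset.mem_sdiff] at hs
    obtain ⟨τ1, F, E⟩ := conj3 hn hf h1 h2 h3 (mem_fx.1 hp'.1).1 hp'.2 hs.1
    rw [← E]
    refine ih _ ?_ τ1 τ' rfl ?_ h3'
    · rw [← hN]
      apply Finset.card_lt_card
      rw [Finset.ssubset_iff_of_subset]
      · exact ⟨p, hp, by simp [F]⟩
      · intro x hx
        rw [F] at hx
        grind
    · rw [F, Finset.card_insert_of_notMem (by grind), Finset.card_erase_of_mem hs.1, h3]
  · have hsub : fx M τ' ⊆ fx M τ := by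
      intro x hx; by_contra h; exact hD ⟨x, Finset.mem_sdiff.2 ⟨hx, h⟩⟩
    have := Finset.eq_of_subset_of_card_le hsub (by omega)
    exact sameT hn hf h1 h2 _ τ τ' rfl h3 this

theorem zero_pos (hn : 7 ≤ n) (hf : CubeRel f)
    (h1 : ∀ τ, (fx M τ).card = 1 → f τ = 0) (h2 : ∀ τ, (fx M τ).card = 2 → f τ = 0)
    (h3 : ∀ τ, (fx M τ).card = 3 → f τ = 0) :
    ∀ (k : ℕ) (τ : Equiv.Perm (Fin n)), (fx M τ).card = k → 1 ≤ k → f τ = 0 := by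
  intro k
  induction k using Nat.strong_induction_on with
  | _ k ih =>
  intro τ hk hk1
  by_cases k3 : k ≤ 3
  · have : k = 1 ∨ k = 2 ∨ k = 3 := by omega
    rcases this with rfl | rfl | rfl
    exacts [h1 _ hk, h2 _ hk, h3 _ hk]
  obtain ⟨U, hU, hUc⟩ := Finset.exists_subset_card_eq (s := fx M τ) (n := 4) (by omega)
  obtain ⟨s, a, c, e, hsa, hsc, hse, hac, hae, hce, rfl⟩ := Finset.card_eq_four.1 hUc
  have hs : s ∈ fx M τ := hU (by simp)
  have ha : a ∈ fx M τ := hU (by simp)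
  have hc : c ∈ fx M τ := hU (by simp)
  have he : e ∈ fx M τ := hU (by simp)
  obtain ⟨b, hb⟩ := exists_new ({s, a, c, e} : Finset (Fin n))
    (lt_of_le_of_lt Finset.card_le_four (by omega))
  obtain ⟨d, hd⟩ := exists_new ({s, a, c, e, b} : Finset (Fin n))
    (lt_of_le_of_lt Finset.card_le_five (by omega))
  obtain ⟨g, hg⟩ := exists_new ({s, a, c, e, b, d} : Finset (Fin n))
    (lt_of_le_of_lt Finset.card_le_six (by omega))
  simp only [Finset.mem_insert, Finset.mem_singleton, not_or] at hb hd hg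
  have key := hf τ a b c d e g (by simp; grind)
  have z : ∀ τ' (T : Finset (Fin n)), fx M τ' = fx M τ \ T → s ∉ T →
      (∃ x ∈ fx M τ, x ∈ T) → f τ' = 0 := by
    intro τ' T hT m1 ⟨x, m2, m3⟩
    refine ih _ ?_ τ' rfl (Finset.card_pos.2 ⟨s, by rw [hT]; exact Finset.mem_sdiff.2 ⟨hs, m1⟩⟩)
    rw [← hk, hT]
    refine Finset.card_lt_card ((Finset.ssubset_iff_of_subset Finset.sdiff_subset).2 ⟨x, m2, ?_⟩)
    simp [m3]
  have nab : s ∉ ({a, b} : Finset (Fin n)) := by simp; exact ⟨hsa, Ne.symm hb.1⟩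
  have ncd : s ∉ ({c, d} : Finset (Fin n)) := by simp; exact ⟨hsc, Ne.symm hd.1⟩
  have neg : s ∉ ({e, g} : Finset (Fin n)) := by simp; exact ⟨hse, Ne.symm hg.1⟩
  have cab : c ∉ ({a, b} : Finset (Fin n)) := by simp; exact ⟨hac.symm, Ne.symm hb.2.2.1⟩
  have eab : e ∉ ({a, b} : Finset (Fin n)) := by simp; exact ⟨hae.symm, Ne.symm hb.2.2.2⟩
  have ecd : e ∉ ({c, d} : Finset (Fin n)) := by simp; exact ⟨hce.symm, Ne.symm hd.2.2.2.1⟩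
  have hab : a ≠ b := Ne.symm hb.2.1
  have hcd : c ≠ d := Ne.symm hd.2.2.1
  have heg : e ≠ g := Ne.symm hg.2.2.2.1
  have F1 : fx M (τ * Equiv.swap a b) = fx M τ \ {a, b} := fx_down ha hab
  have F2 : fx M (τ * Equiv.swap c d) = fx M τ \ {c, d} := fx_down hc hcd
  have F3 : fx M (τ * Equiv.swap e g) = fx M τ \ {e, g} := fx_down he heg
  have F12 : fx M (τ * Equiv.swap a b * Equiv.swap c d) = fx M τ \ ({a, b} ∪ {c, d}) := by
    rw [fx_down (by rw [F1]; exact Finset.mem_sdiff.2 ⟨hc, cab⟩) hcd, F1]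
    ext; simp; tauto
  have F13 : fx M (τ * Equiv.swap a b * Equiv.swap e g) = fx M τ \ ({a, b} ∪ {e, g}) := by
    rw [fx_down (by rw [F1]; exact Finset.mem_sdiff.2 ⟨he, eab⟩) heg, F1]
    ext; simp; tauto
  have F23 : fx M (τ * Equiv.swap c d * Equiv.swap e g) = fx M τ \ ({c, d} ∪ {e, g}) := by
    rw [fx_down (by rw [F2]; exact Finset.mem_sdiff.2 ⟨he, ecd⟩) heg, F2]
    ext; simp; tauto
  have F123 : fx M (τ * Equiv.swap a b * Equiv.swap c d * Equiv.swap e g)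
      = fx M τ \ ({a, b} ∪ {c, d} ∪ {e, g}) := by
    rw [fx_down (by
      rw [F12]
      refine Finset.mem_sdiff.2 ⟨he, ?_⟩
      rw [Finset.mem_union]; tauto) heg, F12]
    ext; simp; tauto
  rw [z _ _ F1 nab ⟨a, ha, by simp⟩, z _ _ F2 ncd ⟨c, hc, by simp⟩,
    z _ _ F3 neg ⟨e, he, by simp⟩,
    z _ _ F12 (by rw [Finset.mem_union]; tauto) ⟨a, ha, by simp⟩,
    z _ _ F13 (by rw [Finset.mem_union]; tauto) ⟨a, ha, by simp⟩,
    z _ _ F23 (by rw [Finset.mem_union]; tauto) ⟨c, hc, by simp⟩,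
    z _ _ F123 (by rw [Finset.mem_union, Finset.mem_union]; tauto) ⟨a, ha, by simp⟩] at key
  linarith

theorem zero_all (hn : 7 ≤ n) (hM : 7 ≤ M.card) (hf : CubeRel f)
    (h1 : ∀ τ, (fx M τ).card = 1 → f τ = 0) (h2 : ∀ τ, (fx M τ).card = 2 → f τ = 0)
    (h3 : ∀ τ, (fx M τ).card = 3 → f τ = 0) (σ : Equiv.Perm (Fin n)) : f σ = 0 := by
  have hpos := zero_pos hn hf h1 h2 h3
  by_cases hk : 1 ≤ (fx M σ).card
  · exact hpos _ σ rfl hk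
  have hemp : ∀ x ∈ M, σ x ≠ x := by
    intro x hx h
    exact hk (Finset.card_pos.2 ⟨x, mem_fx.2 ⟨hx, h⟩⟩)
  obtain ⟨u1, hu1, -⟩ := Finset.exists_mem_notMem_of_card_lt_card
    (s := (∅ : Finset (Fin n))) (t := M) (by rw [Finset.card_empty]; omega)
  obtain ⟨x1, hx1⟩ := σ.surjective u1
  obtain ⟨u2, hu2, hu2'⟩ := Finset.exists_mem_notMem_of_card_lt_card
    (s := ({u1, x1, σ u1} : Finset (Fin n))) (t := M) 
    (lt_of_le_of_lt Finset.card_le_three (by omega))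
  obtain ⟨x2, hx2⟩ := σ.surjective u2
  obtain ⟨u3, hu3, hu3'⟩ := Finset.exists_mem_notMem_of_card_lt_card
    (s := ({u1, x1, σ u1, u2, x2, σ u2} : Finset (Fin n))) (t := M) 
    (lt_of_le_of_lt Finset.card_le_six (by omega))
  obtain ⟨x3, hx3⟩ := σ.surjective u3
  simp only [Finset.mem_insert, Finset.mem_singleton, not_or] at hu2' hu3'
  have n1 := hemp u1 hu1
  have n2 := hemp u2 hu2
  have n3 := hemp u3 hu3
  have key := hf σ u1 x1 u2 x2 u3 x3 (by simp; grind)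
  have z : ∀ (τ' : Equiv.Perm (Fin n)) (x : Fin n), x ∈ M → τ' x = x → f τ' = 0 :=
    fun τ' x hx h => hpos _ τ' rfl (Finset.card_pos.2 ⟨x, mem_fx.2 ⟨hx, h⟩⟩)
  have A : ∀ x y, x ≠ u1 → y ≠ u1 → Equiv.swap x y u1 = u1 := fun x y h h' =>
    Equiv.swap_apply_of_ne_of_ne h.symm h'.symm
  have B : Equiv.swap u3 x3 u2 = u2 := Equiv.swap_apply_of_ne_of_ne (by grind) (by grind)
  have A2 : Equiv.swap u2 x2 u1 = u1 := A _ _ (by grind) (by grind)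
  have A3 : Equiv.swap u3 x3 u1 = u1 := A _ _ (by grind) (by grind)
  rw [z (σ * Equiv.swap u1 x1) u1 hu1 (by simp [hx1]),
    z (σ * Equiv.swap u2 x2) u2 hu2 (by simp [hx2]),
    z (σ * Equiv.swap u3 x3) u3 hu3 (by simp [hx3]),
    z (σ * Equiv.swap u1 x1 * Equiv.swap u2 x2) u1 hu1 (by simp [A2, hx1]),
    z (σ * Equiv.swap u1 x1 * Equiv.swap u3 x3) u1 hu1 (by simp [A3, hx1]),
    z (σ * Equiv.swap u2 x2 * Equiv.swap u3 x3) u2 hu2 (by simp [B, hx2]),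
    z (σ * Equiv.swap u1 x1 * Equiv.swap u2 x2 * Equiv.swap u3 x3) u1 hu1
      (by simp [A2, A3, hx1])] at key
  linarith

theorem core_thm (hn : 7 ≤ n) (hM : 7 ≤ M.card) (hf : CubeRel f)
    (hq : CubeRel (fun τ => ((fx M τ).card - 1 : ℝ) * ((fx M τ).card - 2 : ℝ)))
    (h1 : ∀ τ, (fx M τ).card = 1 → f τ = 0) (h2 : ∀ τ, (fx M τ).card = 2 → f τ = 0) :
    ∃ c : ℝ, ∀ τ, f τ = c * (((fx M τ).card - 1 : ℝ) * ((fx M τ).card - 2 : ℝ)) := by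
  obtain ⟨c, hc⟩ : ∃ c : ℝ, ∀ τ, (fx M τ).card = 3 → f τ = c * 2 := by
    by_cases h : ∃ τ, (fx M τ).card = 3
    · obtain ⟨τ, hτ⟩ := h
      refine ⟨f τ / 2, fun τ' hτ' => ?_⟩
      rw [const3 hn hf h1 h2 _ τ τ' rfl hτ hτ']; ring
    · exact ⟨0, fun τ hτ => absurd ⟨τ, hτ⟩ h⟩
  refine ⟨c, fun τ => ?_⟩
  have := zero_all (f := fun τ => f τ - c * (((fx M τ).card - 1 : ℝ) * ((fx M τ).card - 2 : ℝ)))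
    hn hM (by
      intro σ a b c' d e g h
      have e1 := hf σ a b c' d e g h
      have e2 := hq σ a b c' d e g h
      simp only at e2 ⊢
      linear_combination e1 - c * e2) (fun τ h => by simp [h1 τ h, h]) (fun τ h => by simp [h2 τ h, h])
      (fun τ h => by simp only [hc τ h, h]; push_cast; ring) τ
  linarith

end core

/-- The left-hand side of the QAP4 inequality as a linear functional. -/
noncomputable def qapFun {n m : ℕ} (i j : Fin m → Fin n) :
    ((Fin n × Fin n) → (Fin n × Fin n) → ℝ) →ₗ[ℝ] ℝ where
  toFun Y := ∑ r : Fin m, Y (i r, j r) (i r, j r)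
        - ∑ r : Fin m, ∑ s : Fin m, if r < s then Y (i r, j r) (i s, j s) else 0
  map_add' Y Z := by
    have : ∀ r s : Fin m, (if r < s then (Y + Z) (i r, j r) (i s, j s) else 0)
        = (if r < s then Y (i r, j r) (i s, j s) else 0)
          + (if r < s then Z (i r, j r) (i s, j s) else 0) := by
      intro r s; split_ifs <;> simp
    simp only [this]
    simp only [Finset.sum_add_distrib, Pi.add_apply]
    ring
  map_smul' c Y := by
    have : ∀ r s : Fin m, (if r < s then (c • Y) (i r, j r) (i s, j s) else 0)
        = c * (if r < s then Y (i r, j r) (i s, j s) else 0) := by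
      intro r s; split_ifs <;> simp
    simp only [this]
    simp only [← Finset.mul_sum, Pi.smul_apply, smul_eq_mul, RingHom.id_apply]
    ring

/-- number of hits -/
def hits {n m : ℕ} (i j : Fin m → Fin n) (σ : Equiv.Perm (Fin n)) : ℕ :=
  (Finset.univ.filter (fun r : Fin m => σ (i r) = j r)).card

theorem sum_lt_aux {m : ℕ} (u : Fin m → ℝ) (hu : ∀ r, u r * u r = u r) :
    2 * (∑ r : Fin m, ∑ s : Fin m, if r < s then u r * u s else 0)
      = (∑ r, u r) * (∑ r, u r) - ∑ r, u r := by
  have e : ∀ r s : Fin m, u r * u s = (if r < s then u r * u s else 0)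
      + (if s < r then u s * u r else 0) + (if r = s then u r else 0) := by
    intro r s
    rcases lt_trichotomy r s with h | h | h
    · simp [h, h.ne, h.not_gt]
    · subst h; simp [hu]
    · simp [h, h.ne', h.not_gt, mul_comm]
  have : (∑ r, u r) * (∑ r, u r) = ∑ r, ∑ s, u r * u s := Finset.sum_mul_sum _ _ _ _
  rw [this]
  have e2 : ∑ r, ∑ s, u r * u s = ∑ r : Fin m, ∑ s : Fin m, ((if r < s then u r * u s else 0)
      + (if s < r then u s * u r else 0) + (if r = s then u r else 0)) :=
    Finset.sum_congr rfl fun r _ => Finset.sum_congr rfl fun s _ => e r s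
  rw [e2]
  simp only [Finset.sum_add_distrib]
  rw [Finset.sum_comm (f := fun r s : Fin m => if s < r then u s * u r else 0)]
  simp
  ring

theorem qapFun_permMat2 {n m : ℕ} (i j : Fin m → Fin n) (σ : Equiv.Perm (Fin n)) :
    qapFun i j (permMat2 σ) = 1 - ((hits i j σ : ℝ) - 1) * ((hits i j σ : ℝ) - 2) / 2 := by
  have hh : (hits i j σ : ℝ) = ∑ r, ind σ (i r) (j r) := by
    simp [hits, ind]
  have hu : ∀ r, ind σ (i r) (j r) * ind σ (i r) (j r) = ind σ (i r) (j r) := by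
    intro r; simp [ind]
  have := sum_lt_aux (fun r => ind σ (i r) (j r)) hu
  have e : qapFun i j (permMat2 σ) = ∑ r, ind σ (i r) (j r) - ∑ r : Fin m, ∑ s : Fin m,
      if r < s then ind σ (i r) (j r) * ind σ (i s) (j s) else 0 := by
    change ∑ r : Fin m, permMat2 σ (i r, j r) (i r, j r) - ∑ r : Fin m, ∑ s : Fin m,
      (if r < s then permMat2 σ (i r, j r) (i s, j s) else 0) = _
    simp only [permMat2_eq, hu]
  rw [e, hh]
  linarith

theorem exists_ext {n m : ℕ} (i j : Fin m → Fin n) (hi : Function.Injective i)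
    (hj : Function.Injective j) : ∃ π : Equiv.Perm (Fin n), ∀ r, π (i r) = j r := by
  classical
  let e : {x // x ∈ Set.range i} ≃ {x // x ∈ Set.range j} :=
    (Equiv.ofInjective i hi).symm.trans (Equiv.ofInjective j hj)
  refine ⟨e.extendSubtype, fun r => ?_⟩
  rw [Equiv.extendSubtype_apply_of_mem e (i r) ⟨r, rfl⟩]
  have : (Equiv.ofInjective i hi).symm ⟨i r, ⟨r, rfl⟩⟩ = r :=
    Equiv.ofInjective_symm_apply hi r
  simp [e, this]

theorem CubeRel.comp_linear {n : ℕ} {V W : Type*} [AddCommGroup V] [AddCommGroup W] [Module ℝ V]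
    [Module ℝ W] {f : Equiv.Perm (Fin n) → V} (hf : CubeRel f) (φ : V →ₗ[ℝ] W) :
    CubeRel (fun σ => φ (f σ)) := by
  intro σ a b c d e g h
  have := congrArg φ (hf σ a b c d e g h)
  simpa only [map_sub, map_add, map_zero] using this

theorem CubeRel.left_mul {n : ℕ} {V : Type*} [AddCommGroup V]
    {f : Equiv.Perm (Fin n) → V} (hf : CubeRel f) (π : Equiv.Perm (Fin n)) :
    CubeRel (fun σ => f (π * σ)) := by
  intro σ a b c d e g h
  have := hf (π * σ) a b c d e g h
  simpa only [mul_assoc] using this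

/-- Main rigidity statement: a functional constant on the face is determined by the inequality. -/
theorem rigid {n m : ℕ} (hm : 7 ≤ m) (hn : 7 ≤ n)
    (i j : Fin m → Fin n) (hi : Function.Injective i) (hj : Function.Injective j)
    (φ : ((Fin n × Fin n) → (Fin n × Fin n) → ℝ) →ₗ[ℝ] ℝ) (t : ℝ)
    (h : ∀ σ ∈ Sk i j 1 ∪ Sk i j 2, φ (permMat2 σ) = t) :
    ∃ c : ℝ, ∀ σ, φ (permMat2 σ) - t = c * (((hits i j σ : ℝ) - 1) * ((hits i j σ : ℝ) - 2)) := by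
  obtain ⟨π, hπ⟩ := exists_ext i j hi hj
  have hfx : ∀ τ, (fx (Finset.univ.image i) τ).card = hits i j (π * τ) := by
    intro τ
    have : fx (Finset.univ.image i) τ
        = (Finset.univ.filter (fun r : Fin m => (π * τ) (i r) = j r)).image i := by
      ext x
      simp only [mem_fx, Finset.mem_image, Finset.mem_univ, true_and, Finset.mem_filter]
      simp only [Equiv.Perm.mul_apply]
      constructor
      · rintro ⟨⟨r, rfl⟩, hx⟩
        exact ⟨r, by rw [hx, hπ], rfl⟩
      · rintro ⟨r, hr, rfl⟩
        exact ⟨⟨r, rfl⟩, π.injective (by rw [hr, hπ])⟩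
    rw [this, Finset.card_image_of_injective _ hi]; rfl
  have cφ : CubeRel (fun τ => φ (permMat2 (π * τ)) - t) := by
    intro σ a b c d e g hd
    have := (cubeRel_permMat2.left_mul π).comp_linear φ σ a b c d e g hd
    simp only at this ⊢
    linarith
  have cq : CubeRel (fun τ => (((fx (Finset.univ.image i) τ).card : ℝ) - 1)
      * (((fx (Finset.univ.image i) τ).card : ℝ) - 2)) := by
    intro σ a b c d e g hd
    have := (cubeRel_permMat2.left_mul π).comp_linear (qapFun i j) σ a b c d e g hd
    simp only [qapFun_permMat2] at this
    simp only [hfx]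
    linarith
  obtain ⟨c, hc⟩ := core_thm hn
    (by rw [Finset.card_image_of_injective _ hi, Finset.card_univ, Fintype.card_fin]; exact hm)
    cφ cq
    (fun τ hτ => sub_eq_zero.2 (h _ (Or.inl ((hfx τ).symm.trans hτ))))
    (fun τ hτ => sub_eq_zero.2 (h _ (Or.inr ((hfx τ).symm.trans hτ))))
  refine ⟨c, fun σ => ?_⟩
  have := hc (π⁻¹ * σ)
  rw [hfx] at this
  simpa using this

theorem stmt9 {n m : ℕ} (hmn : m ≤ n) (hm : 7 ≤ m) (hn : 7 ≤ n)
    (i j : Fin m → Fin n) (hi : Function.Injective i) (hj : Function.Injective j) :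
    (∀ Y ∈ convexHull ℝ (Set.range (permMat2 (n := n))),
      (∑ r : Fin m, Y (i r, j r) (i r, j r)
        - ∑ r : Fin m, ∑ s : Fin m, if r < s then Y (i r, j r) (i s, j s) else 0) ≤ 1)
    ∧ Module.finrank ℝ (affineSpan ℝ (permMat2 '' (Sk i j 1 ∪ Sk i j 2))).direction + 1
        = Module.finrank ℝ (affineSpan ℝ (Set.range (permMat2 (n := n)))).direction := by
  constructor
  · have hsub : convexHull ℝ (Set.range (permMat2 (n := n))) ⊆ {Y | qapFun i j Y ≤ 1} := by
      apply convexHull_min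
      · rintro _ ⟨σ, rfl⟩
        rw [Set.mem_ofPred_eq, qapFun_permMat2]
        have : (0 : ℝ) ≤ ((hits i j σ : ℝ) - 1) * ((hits i j σ : ℝ) - 2) := by
          rcases Nat.lt_or_ge (hits i j σ) 2 with h | h
          · have h' : (hits i j σ : ℝ) ≤ 1 := by exact_mod_cast Nat.lt_succ_iff.1 h
            nlinarith
          · have h' : (2 : ℝ) ≤ (hits i j σ : ℝ) := by exact_mod_cast h
            nlinarith
        linarith
      · exact convex_halfSpace_le (qapFun i j).isLinear 1
    intro Y hY
    exact hsub hY
  obtain ⟨π, hπ⟩ := exists_ext i j hi hj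
  have hitsπ : hits i j π = m := by simp [hits, hπ]
  have hm7 : (7 : ℝ) ≤ m := by exact_mod_cast hm
  have hpos : ((m : ℝ) - 1) * ((m : ℝ) - 2) ≠ 0 := by
    apply mul_ne_zero <;> linarith
  -- the face contains a vertex
  obtain ⟨s0, hs0⟩ : (Sk i j 1 ∪ Sk i j 2).Nonempty := by
    by_contra hne
    rw [Set.not_nonempty_iff_eq_empty] at hne
    obtain ⟨c, hc⟩ := rigid hm hn i j hi hj 0 (-1) (by rw [hne]; simp)
    let a : Fin m := ⟨0, by omega⟩
    let b : Fin m := ⟨1, by omega⟩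
    have hab : a ≠ b := by simp [a, b]
    have h2 : hits i j (π * Equiv.swap (i a) (i b)) = m - 2 := by
      have : (Finset.univ.filter (fun r : Fin m => (π * Equiv.swap (i a) (i b)) (i r) = j r))
          = Finset.univ \ {a, b} := by
        ext r
        simp only [Finset.mem_filter, Finset.mem_univ, true_and,
          Finset.mem_sdiff, Finset.mem_insert, Finset.mem_singleton, not_or]
        simp only [Equiv.Perm.mul_apply]
        rw [hi.swap_apply, hπ]
        rw [hj.eq_iff]
        by_cases h1 : r = a
        · subst h1; simpa using hab.symm
        by_cases h2 : r = b
        · subst h2; simpa using hab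
        simp [Equiv.swap_apply_of_ne_of_ne h1 h2, h1, h2]
      rw [hits, this, Finset.card_sdiff_of_subset (Finset.subset_univ _), Finset.card_pair hab]
      simp
    have e1 := hc π
    have e2 := hc (π * Equiv.swap (i a) (i b))
    rw [hitsπ] at e1
    rw [h2, Nat.cast_sub (by omega)] at e2
    simp only [LinearMap.zero_apply] at e1 e2
    push_cast at e2
    have : c * (4 * (m : ℝ) - 10) = 0 := by linear_combination e1 * (-1) + e2
    rcases mul_eq_zero.1 this with h | h
    · rw [h] at e1; norm_num at e1
    · linarith
  have slack0 : ∀ σ ∈ Sk i j 1 ∪ Sk i j 2, qapFun i j (permMat2 σ) = 1 := by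
    rintro σ (h | h)
    · have h' : hits i j σ = 1 := h
      rw [qapFun_permMat2, h']; norm_num
    · have h' : hits i j σ = 2 := h
      rw [qapFun_permMat2, h']; norm_num
  rw [direction_affineSpan, direction_affineSpan]
  set D := vectorSpan ℝ (permMat2 '' (Sk i j 1 ∪ Sk i j 2)) with hD
  have hDq : D ≤ LinearMap.ker (qapFun i j) := by
    rw [hD, vectorSpan_def, Submodule.span_le]
    rintro _ ⟨_, ⟨σ, hσ, rfl⟩, _, ⟨τ, hτ, rfl⟩, rfl⟩
    simp [slack0 σ hσ, slack0 τ hτ]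
  have hv : permMat2 π - permMat2 s0 ∉ D := by
    intro h
    have := hDq h
    rw [LinearMap.mem_ker, map_sub, slack0 s0 hs0, qapFun_permMat2, hitsπ] at this
    apply hpos
    linarith
  rw [← Submodule.finrank_sup_span_singleton hv]
  have heq : D ⊔ Submodule.span ℝ {permMat2 π - permMat2 s0}
      = vectorSpan ℝ (Set.range (permMat2 (n := n))) := by
    apply le_antisymm
    · apply sup_le
      · exact vectorSpan_mono ℝ (Set.image_subset_range _ _)
      · rw [Submodule.span_singleton_le_iff_mem]
        exact vsub_mem_vectorSpan ℝ ⟨π, rfl⟩ ⟨s0, rfl⟩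
    · have main : ∀ σ, permMat2 σ - permMat2 s0
          ∈ D ⊔ Submodule.span ℝ {permMat2 π - permMat2 s0} := by
        intro σ
        by_contra hσ
        obtain ⟨φ, hφ, hker⟩ := Submodule.exists_le_ker_of_notMem hσ
        obtain ⟨c, hc⟩ := rigid hm hn i j hi hj φ (φ (permMat2 s0)) (by
          intro τ hτ
          have : permMat2 τ - permMat2 s0 ∈ D :=
            vsub_mem_vectorSpan ℝ ⟨τ, hτ, rfl⟩ ⟨s0, hs0, rfl⟩
          have := hker (Submodule.mem_sup_left this)
          rw [LinearMap.mem_ker, map_sub] at this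
          linarith)
        have h0 := hker (Submodule.mem_sup_right (Submodule.mem_span_singleton_self _))
        rw [LinearMap.mem_ker, map_sub, hc π, hitsπ] at h0
        have c0 : c = 0 := (mul_eq_zero.1 h0).resolve_right hpos
        apply hφ
        rw [map_sub, hc σ, c0, zero_mul]
      rw [vectorSpan_def, Submodule.span_le]
      rintro _ ⟨_, ⟨σ, rfl⟩, _, ⟨τ, rfl⟩, rfl⟩
      have := Submodule.sub_mem _ (main σ) (main τ)
      simpa using this
  rw [heq]
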